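/- Let β ∈ (1,2) be a multinacci number. Then the union of all β-Lyndon intervals has full Lebesgue measure in [0, 1 − 1/β); that is, the Lebesgue measure of [0, 1 − 1/β) \ ⋃ [t_L, t_R) is zero. -/

import Mathlib

open Set Filter MeasureTheory

/-- The β-transformation `x ↦ βx (mod 1)`. -/
noncomputable def Tbeta (β x : ℝ) : ℝ := Int.fract (β * x)

/-- The survivor set `K_β(t) = {x ∈ [0,1) : T_β^n x ≥ t for all n ≥ 0}`. -/
def Kset (β t : ℝ) : Set ℝ := {x | x ∈ Set.Ico (0 : ℝ) 1 ∧ ∀ n : ℕ, t ≤ (Tbeta β)^[n] x}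

/-- Strict lexicographic order on sequences of naturals. -/
def seqLt (x y : ℕ → ℕ) : Prop := ∃ n, (∀ i, i < n → x i = y i) ∧ x n < y n

/-- Lexicographic order on sequences of naturals. -/
def seqLe (x y : ℕ → ℕ) : Prop := x = y ∨ seqLt x y

/-- The `n`-th iterate of the left shift. -/
def shiftN (n : ℕ) (x : ℕ → ℕ) : ℕ → ℕ := fun i => x (i + n)

/-- The sequence `w 0^∞`. -/
def wordSeq (w : List ℕ) : ℕ → ℕ := fun i => w.getD i 0

/-- The periodic sequence `w^∞`. -/
def perSeq (w : List ℕ) : ℕ → ℕ := fun i => w.getD (i % w.length) 0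

/-- The sequence obtained by concatenating the word `w` with the sequence `x`. -/
def catSeq (w : List ℕ) (x : ℕ → ℕ) : ℕ → ℕ :=
  fun i => if i < w.length then w.getD i 0 else x (i - w.length)

/-- The greedy β-expansion of `t`: the digit `b_{i+1}` is `⌊β T_β^i t⌋`. -/
noncomputable def greedy (β t : ℝ) : ℕ → ℕ := fun i => (⌊β * (Tbeta β)^[i] t⌋).toNat

/-- `d` is the quasi-greedy β-expansion of `1`: the lexicographically largest
sequence in `{0,1}^ℕ` not ending in `0^∞` whose digits sum to `1` in base `β`. -/
def IsQuasiGreedy (β : ℝ) (d : ℕ → ℕ) : Prop :=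
  (∀ i, d i ≤ 1) ∧ (¬ ∃ N, ∀ n, N ≤ n → d n = 0) ∧
  (∑' i : ℕ, (d i : ℝ) / β ^ (i + 1) = 1) ∧
  ∀ e : ℕ → ℕ, (∀ i, e i ≤ 1) → (¬ ∃ N, ∀ n, N ≤ n → e n = 0) →
    (∑' i : ℕ, (e i : ℝ) / β ^ (i + 1) = 1) → seqLe e d

/-- `s = s_1…s_p` is a β-Lyndon word: `s_{i+1}…s_p ≻ s_1…s_{p-i}` for `1 ≤ i < p`
and `σ^n(s^∞) ≺ δ(β)` for all `n ≥ 0`. -/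
def IsBetaLyndon (β : ℝ) (s : List ℕ) : Prop :=
  s ≠ [] ∧ (∀ a ∈ s, a ≤ 1) ∧
  (∀ i, 1 ≤ i → i < s.length →
    seqLt (wordSeq (s.take (s.length - i))) (wordSeq (s.drop i))) ∧
  (∀ d : ℕ → ℕ, IsQuasiGreedy β d → ∀ n : ℕ, seqLt (shiftN n (perSeq s)) d)

/-- Left endpoint `t_L = Σ_{i=1}^p s_i β^{-i}` of the β-Lyndon interval generated by `s`. -/
noncomputable def lyndonLeft (β : ℝ) (s : List ℕ) : ℝ :=
  ∑ i ∈ Finset.range s.length, (s.getD i 0 : ℝ) / β ^ (i + 1)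

/-- Right endpoint `t_R = (β^p/(β^p - 1)) t_L` of the β-Lyndon interval generated by `s`. -/
noncomputable def lyndonRight (β : ℝ) (s : List ℕ) : ℝ :=
  β ^ s.length / (β ^ s.length - 1) * lyndonLeft β s

/-- The union of all β-Lyndon intervals `[t_L, t_R)`. -/
noncomputable def lyndonUnionIco (β : ℝ) : Set ℝ :=
  ⋃ s ∈ {s : List ℕ | IsBetaLyndon β s}, Set.Ico (lyndonLeft β s) (lyndonRight β s)

/-- The symbolic survivor set `K̃_β(t)` with upper bound sequence `d = δ(β)`. -/
def Ktilde (β t : ℝ) (d : ℕ → ℕ) : Set (ℕ → ℕ) :=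
  {x | (∀ i, x i ≤ 1) ∧ ∀ n : ℕ, seqLe (greedy β t) (shiftN n x) ∧ seqLe (shiftN n x) d}

/-- The set-valued bifurcation set `E_β`. -/
def Eset (β : ℝ) : Set ℝ :=
  {t | t ∈ Set.Ico (0 : ℝ) 1 ∧ ∀ t', t < t' → t' < 1 → Kset β t' ≠ Kset β t}

/-- The dimension bifurcation set `B_β`. -/
def Bset (β : ℝ) : Set ℝ :=
  {t | t ∈ Set.Ico (0 : ℝ) 1 ∧ ∀ t', t < t' → t' < 1 → dimH (Kset β t') ≠ dimH (Kset β t)}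

/-- `β` is a multinacci number: `β^{m+1} = β^m + ⋯ + β + 1` for some `m ≥ 1`. -/
def IsMultinacci (β : ℝ) : Prop :=
  ∃ m : ℕ, 1 ≤ m ∧ β ^ (m + 1) = ∑ i ∈ Finset.range (m + 1), β ^ i

/-!
Almost every `t` has an orbit under `T_β` that drops below `t`: for `a > 0` the survivor set
`K_β(a)` is porous, because arbitrarily close to each of its points there is an interval, of length
comparable to its distance from the point, that an affine branch of some `T_β^n` maps below `a`.
So `K_β(a)` is null by Lebesgue's density theorem, and `t ∈ K_β(t)` with `t > 0` puts `t` into one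
of the countably many sets `K_β(1/j)`.

If `n` is the first time with `T_β^n t < t`, the first `n` greedy digits of `t` form a word `s`
whose β-Lyndon interval contains `t`. Minimality of `n` makes `s` a Lyndon word. For multinacci `β`
with `δ(β) = (1^m 0)^∞`, admissibility of `s^∞` only forbids runs of `m + 1` ones, which greedy
expansions never contain, and the sequence `(0 1^m)^∞`, which is excluded by `t < 1 - 1/β`.
-/

open scoped Topology

section Porosity

open Metric

theorem measure_eq_zero_of_frequently_disjoint_closedBall {α : Type*} [PseudoMetricSpace α]
    [MeasurableSpace α] [SecondCountableTopology α] [BorelSpace α] (μ : Measure α)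
    [IsUnifLocDoublingMeasure μ] [IsLocallyFiniteMeasure μ] {S : Set α} (K : ℝ)
    (hS : ∀ x ∈ S, ∃ᶠ r in 𝓝[>] 0, ∃ w, x ∈ closedBall w (K * r) ∧ Disjoint S (closedBall w r)) :
    μ S = 0 := by
  by_contra hpos
  obtain ⟨x, hxS, hx⟩ := Measure.exists_mem_of_measure_ne_zero_of_ae hpos
    (IsUnifLocDoublingMeasure.ae_tendsto_measure_inter_div μ S K)
  obtain ⟨r, hr, hhole⟩ := exists_seq_forall_of_frequently (hS x hxS)
  choose w hxw hdisj using hhole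
  have hdensity := hx w r hr (Eventually.of_forall hxw)
  simp only [(hdisj _).inter_eq, measure_empty, ENNReal.zero_div] at hdensity
  exact zero_ne_one (tendsto_nhds_unique tendsto_const_nhds hdensity)

end Porosity

section Tbeta

variable {β x y : ℝ}

lemma Tbeta_nonneg (β x : ℝ) : 0 ≤ Tbeta β x := Int.fract_nonneg _

lemma Tbeta_le_mul (hβ : 0 ≤ β) (hx : 0 ≤ x) : Tbeta β x ≤ β * x := by
  have hfloor : (0 : ℝ) ≤ ⌊β * x⌋ := mod_cast Int.floor_nonneg.2 (mul_nonneg hβ hx)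
  rw [Tbeta, ← Int.self_sub_floor]
  linarith

lemma iterate_Tbeta_nonneg (hx : 0 ≤ x) (n : ℕ) : 0 ≤ (Tbeta β)^[n] x := by
  cases n with
  | zero => exact hx
  | succ n => rw [Function.iterate_succ_apply']; exact Tbeta_nonneg _ _

lemma iterate_Tbeta_lt_one (hx : x < 1) (n : ℕ) : (Tbeta β)^[n] x < 1 := by
  cases n with
  | zero => exact hx
  | succ n => rw [Function.iterate_succ_apply']; exact Int.fract_lt_one _

lemma Tbeta_sub_div (hβ : 0 < β) {u : ℝ} (hu : 0 ≤ u) (hux : u ≤ Tbeta β x) :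
    Tbeta β (x - u / β) = Tbeta β x - u := by
  have hlt : Tbeta β x < 1 := Int.fract_lt_one _
  rw [Tbeta, mul_sub, mul_div_cancel₀ u hβ.ne', Int.fract_eq_iff]
  refine ⟨by linarith, by linarith, ⌊β * x⌋, ?_⟩
  rw [Tbeta, ← Int.self_sub_floor]
  ring

lemma iterate_Tbeta_sub_div_pow (hβ : 0 < β) (hx : 0 ≤ x) {u : ℝ} (hu : 0 ≤ u) {n : ℕ}
    (hux : u ≤ (Tbeta β)^[n] x) :
    (Tbeta β)^[n] (x - u / β ^ n) = (Tbeta β)^[n] x - u := by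
  induction n generalizing u with
  | zero => simp
  | succ n ih =>
    rw [Function.iterate_succ_apply'] at hux
    have hle : u / β ≤ (Tbeta β)^[n] x := by
      rw [div_le_iff₀' hβ]
      exact hux.trans (Tbeta_le_mul hβ.le (iterate_Tbeta_nonneg hx n))
    rw [Function.iterate_succ_apply', Function.iterate_succ_apply', pow_succ', ← div_div,
      ih (by positivity) hle, Tbeta_sub_div hβ hu hux]

end Tbeta

section SurvivorSet

variable {β : ℝ}

lemma Kset_antitone (β : ℝ) : Antitone (Kset β) :=
  fun _ _ hab _ hx ↦ ⟨hx.1, fun n ↦ hab.trans (hx.2 n)⟩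

/- The hole next to `x ∈ K_β(a)` at scale `β⁻ⁿ` is centred at the point `x - u / βⁿ` that `T_β^n`
maps to `a / 2`; its image under `T_β^n` is `[a / 4, 3a / 4]`. -/
lemma exists_disjoint_Kset_closedBall (hβ : 0 < β) {a x : ℝ} (ha : 0 < a) (hx : x ∈ Kset β a)
    (n : ℕ) : ∃ w, x ∈ Metric.closedBall w (4 / a * (a / 4 / β ^ n)) ∧
      Disjoint (Kset β a) (Metric.closedBall w (a / 4 / β ^ n)) := by
  have hpow : 0 < β ^ n := pow_pos hβ n
  have hlower : a ≤ (Tbeta β)^[n] x := hx.2 n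
  have hupper : (Tbeta β)^[n] x < 1 := iterate_Tbeta_lt_one hx.1.2 n
  set u := (Tbeta β)^[n] x - a / 2 with hu
  refine ⟨x - u / β ^ n, ?_, Set.disjoint_left.2 fun z hz hzw ↦ ?_⟩
  · have hradius : 4 / a * (a / 4 / β ^ n) = 1 / β ^ n := by field_simp
    rw [Metric.mem_closedBall, Real.dist_eq, sub_sub_cancel, hradius, abs_of_nonneg (by
      have : 0 ≤ u := by linarith
      positivity)]
    gcongr
    linarith
  · obtain ⟨v, rfl⟩ : ∃ v, z = x - v / β ^ n := ⟨(x - z) * β ^ n, by field_simp; ring⟩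
    rw [Metric.mem_closedBall, Real.dist_eq, sub_sub_sub_cancel_left, ← sub_div, abs_div,
      abs_of_pos hpow, div_le_div_iff_of_pos_right hpow, abs_le] at hzw
    have himage := iterate_Tbeta_sub_div_pow hβ hx.1.1 (u := v) (by linarith) (by linarith)
    linarith [hz.2 n]

theorem volume_Kset_eq_zero (hβ : 1 < β) {a : ℝ} (ha : 0 < a) : volume (Kset β a) = 0 := by
  have hβ0 : 0 < β := one_pos.trans hβ
  have hscale : Tendsto (fun n : ℕ ↦ a / 4 / β ^ n) atTop (𝓝[>] 0) :=
    tendsto_nhdsWithin_iff.2 ⟨(tendsto_pow_atTop_atTop_of_one_lt hβ).const_div_atTop _,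
      Eventually.of_forall fun n ↦ mem_Ioi.2 (by positivity)⟩
  exact measure_eq_zero_of_frequently_disjoint_closedBall volume (4 / a) fun x hx ↦
    hscale.frequently (Frequently.of_forall (exists_disjoint_Kset_closedBall hβ0 ha hx))

theorem volume_setOf_mem_Kset_self (hβ : 1 < β) : volume {t | t ∈ Kset β t} = 0 := by
  have hcover : {t | t ∈ Kset β t} ⊆ {0} ∪ ⋃ j : ℕ, Kset β (1 / ((j : ℝ) + 1)) := by
    intro t ht
    rcases ht.1.1.eq_or_lt with rfl | hpos
    · exact Or.inl rfl
    · obtain ⟨j, hj⟩ := exists_nat_one_div_lt hpos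
      exact Or.inr (mem_iUnion.2 ⟨j, Kset_antitone β hj.le ht⟩)
  exact measure_mono_null hcover (measure_union_null (measure_singleton 0)
    (measure_iUnion_null fun j ↦ volume_Kset_eq_zero hβ (by positivity)))

end SurvivorSet

section Lexicographic

variable {x y z : ℕ → ℕ}

lemma seqLt_iff_toLex_lt : seqLt x y ↔ toLex x < toLex y := Iff.rfl

lemma seqLe_iff_toLex_le : seqLe x y ↔ toLex x ≤ toLex y :=
  (le_iff_eq_or_lt (a := toLex x) (b := toLex y)).symm

lemma seqLt_of_seqLt_of_seqLe (hxy : seqLt x y) (hyz : seqLe y z) : seqLt x z :=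
  lt_of_lt_of_le (seqLt_iff_toLex_lt.1 hxy) (seqLe_iff_toLex_le.1 hyz)

lemma seqLe_of_forall_eq_imp_le (h : ∀ n, (∀ i < n, x i = y i) → x n ≤ y n) : seqLe x y := by
  rw [seqLe_iff_toLex_le, ← not_lt]
  rintro ⟨n, heq, hlt⟩
  exact (h n fun i hi ↦ (heq i hi).symm).not_gt hlt

end Lexicographic

section InitialWord

variable {x y : ℕ → ℕ} {n : ℕ}

/-- The word `x_0 … x_{n-1}` formed by the first `n` terms of the sequence `x`. -/
def seqTake (x : ℕ → ℕ) (n : ℕ) : List ℕ := (List.range n).map x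

@[simp] lemma length_seqTake (x : ℕ → ℕ) (n : ℕ) : (seqTake x n).length = n := by
  simp [seqTake]

lemma getD_seqTake {i : ℕ} (hi : i < n) : (seqTake x n).getD i 0 = x i := by
  simp [seqTake, hi]

lemma take_seqTake {k : ℕ} (hk : k ≤ n) : (seqTake x n).take k = seqTake x k := by
  rw [seqTake, ← List.map_take, List.take_range, min_eq_left hk, seqTake]

lemma drop_seqTake (x : ℕ → ℕ) (n i : ℕ) :
    (seqTake x n).drop i = seqTake (shiftN i x) (n - i) := by
  refine List.ext_getElem (by simp) fun j _ _ ↦ ?_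
  simp [seqTake, shiftN, add_comm]

lemma wordSeq_seqTake {i : ℕ} (hi : i < n) : wordSeq (seqTake x n) i = x i :=
  getD_seqTake hi

lemma perSeq_seqTake (x : ℕ → ℕ) (hn : 0 < n) (i : ℕ) :
    perSeq (seqTake x n) i = x (i % n) := by
  rw [perSeq, length_seqTake, getD_seqTake (Nat.mod_lt i hn)]

lemma seqLt_wordSeq_seqTake (hxy : seqLe x y) (hne : ∃ j < n, x j ≠ y j) :
    seqLt (wordSeq (seqTake x n)) (wordSeq (seqTake y n)) := by
  obtain ⟨j, hjn, hj⟩ := hne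
  obtain rfl | ⟨k, heq, hlt⟩ := hxy
  · exact absurd rfl hj
  have hkn : k < n := (not_lt.1 fun hjk ↦ hj (heq j hjk)).trans_lt hjn
  refine ⟨k, fun i hi ↦ ?_, ?_⟩
  · rw [wordSeq_seqTake (hi.trans hkn), wordSeq_seqTake (hi.trans hkn), heq i hi]
  · rwa [wordSeq_seqTake hkn, wordSeq_seqTake hkn]

end InitialWord

section Greedy

variable {β x y t : ℝ}

lemma greedy_iterate_Tbeta (β t : ℝ) (n : ℕ) :
    greedy β ((Tbeta β)^[n] t) = shiftN n (greedy β t) := by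
  ext i
  simp only [greedy, shiftN, Function.iterate_add_apply]

lemma greedy_add_iterate_Tbeta (hβ : 0 ≤ β) (ht : 0 ≤ t) (n : ℕ) :
    greedy β t n + (Tbeta β)^[n + 1] t = β * (Tbeta β)^[n] t := by
  have hfloor : 0 ≤ ⌊β * (Tbeta β)^[n] t⌋ :=
    Int.floor_nonneg.2 (mul_nonneg hβ (iterate_Tbeta_nonneg ht n))
  have hdigit : (greedy β t n : ℝ) = ⌊β * (Tbeta β)^[n] t⌋ := by
    rw [greedy, ← Int.cast_natCast, Int.toNat_of_nonneg hfloor]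
  rw [Function.iterate_succ_apply', hdigit]
  exact Int.floor_add_fract _

lemma greedy_le_one (hβ : β ∈ Ioc 0 2) (ht : t < 1) (n : ℕ) : greedy β t n ≤ 1 := by
  have hlt : β * (Tbeta β)^[n] t < 2 := by
    nlinarith [iterate_Tbeta_lt_one (β := β) ht n, hβ.1, hβ.2]
  have hfloor : ⌊β * (Tbeta β)^[n] t⌋ < 2 := Int.floor_lt.2 (mod_cast hlt)
  rw [greedy]
  lia

lemma greedy_zero_eq_zero (h : β * t < 1) : greedy β t 0 = 0 :=
  Int.toNat_eq_zero.2 (Int.lt_add_one_iff.1 (Int.floor_lt.2 (by simpa using h)))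

lemma eq_sum_greedy_add (hβ : 0 < β) (ht : 0 ≤ t) (n : ℕ) :
    t = ∑ j ∈ Finset.range n, (greedy β t j : ℝ) / β ^ (j + 1) + (Tbeta β)^[n] t / β ^ n := by
  induction n with
  | zero => simp
  | succ n ih =>
    have hstep : (Tbeta β)^[n] t / β ^ n = (β * (Tbeta β)^[n] t) / β ^ (n + 1) := by
      rw [pow_succ']
      field_simp
    rw [Finset.sum_range_succ, add_assoc, ← add_div, greedy_add_iterate_Tbeta hβ.le ht, ← hstep]
    exact ih

lemma iterate_Tbeta_sub_iterate_Tbeta (hβ : 0 < β) (hx : 0 ≤ x) (hy : 0 ≤ y) {n : ℕ}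
    (h : ∀ j < n, greedy β x j = greedy β y j) :
    (Tbeta β)^[n] y - (Tbeta β)^[n] x = β ^ n * (y - x) := by
  have hsum : ∑ j ∈ Finset.range n, (greedy β x j : ℝ) / β ^ (j + 1) =
      ∑ j ∈ Finset.range n, (greedy β y j : ℝ) / β ^ (j + 1) :=
    Finset.sum_congr rfl fun j hj ↦ by rw [h j (Finset.mem_range.1 hj)]
  have hdiff : y - x = ((Tbeta β)^[n] y - (Tbeta β)^[n] x) / β ^ n := by
    rw [sub_div]
    linarith [eq_sum_greedy_add hβ hx n, eq_sum_greedy_add hβ hy n]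
  rw [hdiff, mul_div_cancel₀ _ (pow_pos hβ n).ne']

lemma seqLe_greedy_of_le (hβ : 0 < β) (hx : 0 ≤ x) (hxy : x ≤ y) :
    seqLe (greedy β x) (greedy β y) := by
  refine seqLe_of_forall_eq_imp_le fun n heq ↦ ?_
  have hdiff := iterate_Tbeta_sub_iterate_Tbeta hβ hx (hx.trans hxy) heq
  have hiter : (Tbeta β)^[n] x ≤ (Tbeta β)^[n] y := by
    rw [← sub_nonneg, hdiff]
    exact mul_nonneg (by positivity) (sub_nonneg.2 hxy)
  exact Int.toNat_le_toNat (Int.floor_le_floor (mul_le_mul_of_nonneg_left hiter hβ.le))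

lemma exists_greedy_eq_zero_of_lt_sum (hβ : 0 < β) (ht : 0 ≤ t) {n : ℕ}
    (h : t < ∑ j ∈ Finset.range n, 1 / β ^ (j + 1)) : ∃ j < n, greedy β t j = 0 := by
  by_contra! hdigits
  have hsum : ∑ j ∈ Finset.range n, 1 / β ^ (j + 1) ≤
      ∑ j ∈ Finset.range n, (greedy β t j : ℝ) / β ^ (j + 1) := by
    gcongr with j hj
    exact_mod_cast Nat.one_le_iff_ne_zero.2 (hdigits j (Finset.mem_range.1 hj))
  have hrest : 0 ≤ (Tbeta β)^[n] t / β ^ n :=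
    div_nonneg (iterate_Tbeta_nonneg ht n) (by positivity)
  linarith [eq_sum_greedy_add hβ ht n]

end Greedy

section LyndonInterval

variable {β t : ℝ} {n : ℕ}

lemma lyndonLeft_seqTake_greedy (hβ : 0 < β) (ht : 0 ≤ t) (n : ℕ) :
    lyndonLeft β (seqTake (greedy β t) n) = t - (Tbeta β)^[n] t / β ^ n := by
  rw [lyndonLeft, length_seqTake, eq_sub_iff_add_eq]
  conv_rhs => rw [eq_sum_greedy_add hβ ht n]
  congr 1
  exact Finset.sum_congr rfl fun j hj ↦ by rw [getD_seqTake (Finset.mem_range.1 hj)]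

lemma mem_Ico_lyndonLeft_lyndonRight (hβ : 1 < β) (ht : 0 ≤ t) (hn : (Tbeta β)^[n] t < t) :
    t ∈ Ico (lyndonLeft β (seqTake (greedy β t) n))
      (lyndonRight β (seqTake (greedy β t) n)) := by
  have hβ0 : 0 < β := one_pos.trans hβ
  have hn0 : n ≠ 0 := by
    rintro rfl
    exact lt_irrefl t hn
  have hpow : 1 < β ^ n := one_lt_pow₀ hβ hn0
  rw [lyndonRight, length_seqTake, lyndonLeft_seqTake_greedy hβ0 ht]
  refine ⟨sub_le_self t (div_nonneg (iterate_Tbeta_nonneg ht n) (by positivity)), ?_⟩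
  rw [div_mul_eq_mul_div, mul_sub, mul_div_cancel₀ _ (by positivity), lt_div_iff₀ (by linarith)]
  linarith

theorem tsum_perSeq (hβ : 1 < β) {w : List ℕ} (hw : w ≠ []) :
    ∑' i, (perSeq w i : ℝ) / β ^ (i + 1) = lyndonRight β w := by
  have hp : w.length ≠ 0 := by simpa using hw
  have : NeZero w.length := ⟨hp⟩
  have hpow : 1 < β ^ w.length := one_lt_pow₀ hβ hp
  have hperiods := hasSum_geometric_of_lt_one (by positivity) (inv_lt_one_of_one_lt₀ hpow)
  have hperiod := hasSum_fintype fun r : Fin w.length ↦ (w.getD r 0 : ℝ) / β ^ ((r : ℕ) + 1)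
  have hproduct := hperiods.mul hperiod (hperiods.summable.mul_of_nonneg hperiod.summable
    (fun _ ↦ by positivity) fun _ ↦ by positivity)
  have hdigit (i : ℕ) : (perSeq w i : ℝ) / β ^ (i + 1) =
      (β ^ w.length)⁻¹ ^ (i / w.length) *
        ((w.getD (i % w.length) 0 : ℝ) / β ^ (i % w.length + 1)) := by
    have hexp : β ^ (i + 1) = (β ^ w.length) ^ (i / w.length) * β ^ (i % w.length + 1) := by
      rw [← pow_mul, ← pow_add, ← add_assoc, Nat.div_add_mod]
    rw [perSeq, hexp, inv_pow]
    field_simp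
  rw [lyndonRight, lyndonLeft, Finset.sum_range fun i ↦ (w.getD i 0 : ℝ) / β ^ (i + 1)]
  convert ((Nat.divModEquiv w.length).hasSum_iff.2 hproduct).tsum_eq using 1
  · exact tsum_congr hdigit
  · congr 1
    have : β ^ w.length - 1 ≠ 0 := by linarith
    field_simp

end LyndonInterval

section Multinacci

variable {β : ℝ} {m : ℕ} {x : ℕ → ℕ}

/-- The word `1^m 0` of length `m + 1`, the period of `δ(β)` for a multinacci `β`. -/
def multinacciWord (m : ℕ) : List ℕ := List.replicate m 1 ++ [0]

lemma length_multinacciWord (m : ℕ) : (multinacciWord m).length = m + 1 := by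
  simp [multinacciWord]

lemma multinacciWord_ne_nil (m : ℕ) : multinacciWord m ≠ [] := by
  simp [multinacciWord]

lemma getD_multinacciWord (m i : ℕ) :
    (multinacciWord m).getD i 0 = if i < m then 1 else 0 := by
  rw [multinacciWord]
  split_ifs with hi
  · rw [List.getD_append _ _ _ _ (by simpa using hi), List.getD_replicate _ hi]
  · rw [List.getD_append_right _ _ _ _ (by simpa using hi)]
    simp

/-- The sequence `(1^m 0)^∞`, which is `δ(β)` when `β^{m+1} = β^m + ⋯ + β + 1`. -/
def multinacciSeq (m : ℕ) : ℕ → ℕ := perSeq (multinacciWord m)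

lemma multinacciSeq_apply (m i : ℕ) :
    multinacciSeq m i = if i % (m + 1) < m then 1 else 0 := by
  rw [multinacciSeq, perSeq, length_multinacciWord, getD_multinacciWord]

lemma multinacciSeq_eq_zero_iff {i : ℕ} : multinacciSeq m i = 0 ↔ m + 1 ∣ i + 1 := by
  have hlt : i % (m + 1) < m + 1 := Nat.mod_lt i m.succ_pos
  rw [multinacciSeq_apply, Nat.dvd_iff_mod_eq_zero, Nat.succ_mod_succ_eq_zero_iff]
  split_ifs <;> lia

lemma multinacciSeq_le_one (m i : ℕ) : multinacciSeq m i ≤ 1 := by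
  rw [multinacciSeq_apply]
  split_ifs <;> simp

lemma multinacciSeq_add_ne_zero {i j : ℕ} (hi : multinacciSeq m i = 0) (hj : 0 < j)
    (hjm : j ≤ m) : multinacciSeq m (i + j) ≠ 0 := by
  rw [multinacciSeq_eq_zero_iff] at hi
  rw [Ne, multinacciSeq_eq_zero_iff, add_right_comm, Nat.dvd_add_right hi]
  exact Nat.not_dvd_of_pos_of_lt hj (Nat.lt_succ_of_le hjm)

lemma seqLe_multinacciSeq (hx : ∀ i, x i ≤ 1) (hzero : ∀ i, ∃ j ≤ m, x (i + j) = 0) :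
    seqLe x (multinacciSeq m) := by
  refine seqLe_of_forall_eq_imp_le fun n heq ↦ ?_
  by_contra! hlt
  have hn : multinacciSeq m n = 0 := by linarith [hx n]
  have hmn : m ≤ n := Nat.lt_succ_iff.1 (Nat.le_of_dvd n.succ_pos (multinacciSeq_eq_zero_iff.1 hn))
  obtain ⟨j, hjm, hj⟩ := hzero (n - m)
  obtain rfl | hjm := hjm.eq_or_lt
  · rw [Nat.sub_add_cancel hmn] at hj
    lia
  · rw [heq _ (by lia)] at hj
    refine multinacciSeq_add_ne_zero hj (j := m - j) (by lia) (by lia) ?_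
    rwa [show n - m + j + (m - j) = n by lia]

lemma shiftN_ne_multinacciSeq {i j k : ℕ} (hi : x i = 0) (hij : x (i + j) = 0) (hj : 0 < j)
    (hjm : j ≤ m) (hk : k ≤ i) : shiftN k x ≠ multinacciSeq m := by
  intro heq
  refine multinacciSeq_add_ne_zero (i := i - k) ?_ hj hjm ?_ <;> rw [← heq, shiftN]
  · rwa [Nat.sub_add_cancel hk]
  · rwa [show i - k + j + k = i + j by lia]

/- Reading `x` from a position congruent to `i`, the periodic sequence either reaches the zero of
`x` at distance `j`, or wraps around first and meets the zero at its start. -/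
lemma perSeq_seqTake_add_min_eq_zero {n i j : ℕ} (hn : 0 < n) (hx : x 0 = 0)
    (hij : x (i % n + j) = 0) : perSeq (seqTake x n) (i + min j (n - i % n)) = 0 := by
  have hlt : i % n < n := Nat.mod_lt i hn
  rw [perSeq_seqTake x hn, ← Nat.mod_add_mod]
  rcases lt_or_ge (i % n + j) n with hj | hj
  · rwa [min_eq_left (by lia), Nat.mod_eq_of_lt hj]
  · rwa [min_eq_right (by lia), Nat.add_sub_cancel' hlt.le, Nat.mod_self]

lemma seqLt_shiftN_perSeq_multinacciSeq {n : ℕ} (hn : 0 < n) (hx : ∀ i, x i ≤ 1) (hx0 : x 0 = 0)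
    (hzero : ∀ i, ∃ j ≤ m, x (i + j) = 0) (hnext : ∃ j, 0 < j ∧ j ≤ m ∧ x j = 0) (k : ℕ) :
    seqLt (shiftN k (perSeq (seqTake x n))) (multinacciSeq m) := by
  have hle : seqLe (shiftN k (perSeq (seqTake x n))) (multinacciSeq m) := by
    refine seqLe_multinacciSeq (fun i ↦ ?_) fun i ↦ ?_
    · rw [shiftN, perSeq_seqTake x hn]
      exact hx _
    · obtain ⟨j, hjm, hj⟩ := hzero ((i + k) % n)
      refine ⟨min j (n - (i + k) % n), (min_le_left _ _).trans hjm, ?_⟩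
      rw [shiftN, add_right_comm]
      exact perSeq_seqTake_add_min_eq_zero hn hx0 hj
  obtain ⟨j, hj0, hjm, hj⟩ := hnext
  have hmod : k * n % n = 0 := Nat.mul_mod_left k n
  have hstart : perSeq (seqTake x n) (k * n) = 0 := by rw [perSeq_seqTake x hn, hmod, hx0]
  have hclose := perSeq_seqTake_add_min_eq_zero (i := k * n) hn hx0 (by rwa [hmod, zero_add])
  rw [hmod] at hclose
  exact hle.resolve_left (shiftN_ne_multinacciSeq hstart hclose (by lia) (by lia)
    (Nat.le_mul_of_pos_right k hn))

lemma one_div_pow_succ_eq_two_sub (hβ : β ≠ 0)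
    (hmulti : β ^ (m + 1) = ∑ i ∈ Finset.range (m + 1), β ^ i) :
    1 / β ^ (m + 1) = 2 - β := by
  have hgeom := geom_sum_mul β (m + 1)
  rw [← hmulti] at hgeom
  rw [div_eq_iff (pow_ne_zero _ hβ)]
  linarith

lemma sum_one_div_pow_succ_mul (hβ : β ≠ 0) (n : ℕ) :
    (∑ j ∈ Finset.range n, 1 / β ^ (j + 1)) * (β - 1) = 1 - 1 / β ^ n := by
  induction n with
  | zero => simp
  | succ n ih =>
    rw [Finset.sum_range_succ, add_mul, ih]
    field_simp
    ring

lemma sum_range_succ_one_div_pow_eq_one (hβ : 1 < β)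
    (hmulti : β ^ (m + 1) = ∑ i ∈ Finset.range (m + 1), β ^ i) :
    ∑ j ∈ Finset.range (m + 1), 1 / β ^ (j + 1) = 1 := by
  have hβ0 : β ≠ 0 := (one_pos.trans hβ).ne'
  apply mul_right_cancel₀ (sub_pos.2 hβ).ne'
  rw [sum_one_div_pow_succ_mul hβ0, one_div_pow_succ_eq_two_sub hβ0 hmulti]
  ring

lemma sum_range_one_div_pow_eq_sub_one (hβ : 1 < β)
    (hmulti : β ^ (m + 1) = ∑ i ∈ Finset.range (m + 1), β ^ i) :
    ∑ j ∈ Finset.range m, 1 / β ^ (j + 1) = β - 1 := by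
  have hsum := sum_range_succ_one_div_pow_eq_one hβ hmulti
  rw [Finset.sum_range_succ, one_div_pow_succ_eq_two_sub (one_pos.trans hβ).ne' hmulti] at hsum
  linarith

lemma lyndonLeft_multinacciWord (hβ : 1 < β)
    (hmulti : β ^ (m + 1) = ∑ i ∈ Finset.range (m + 1), β ^ i) :
    lyndonLeft β (multinacciWord m) = β - 1 := by
  rw [lyndonLeft, length_multinacciWord, Finset.sum_range_succ, getD_multinacciWord,
    if_neg m.lt_irrefl, Nat.cast_zero, zero_div, add_zero,
    ← sum_range_one_div_pow_eq_sub_one hβ hmulti]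
  refine Finset.sum_congr rfl fun j hj ↦ ?_
  rw [getD_multinacciWord, if_pos (Finset.mem_range.1 hj), Nat.cast_one]

theorem tsum_multinacciSeq (hβ : 1 < β)
    (hmulti : β ^ (m + 1) = ∑ i ∈ Finset.range (m + 1), β ^ i) :
    ∑' i, (multinacciSeq m i : ℝ) / β ^ (i + 1) = 1 := by
  have hpow : β ^ (m + 1) * (β - 1) = β ^ (m + 1) - 1 := by
    rw [hmulti, geom_sum_mul, ← hmulti]
  have hone : 1 < β ^ (m + 1) := one_lt_pow₀ hβ m.succ_ne_zero
  rw [multinacciSeq, tsum_perSeq hβ (multinacciWord_ne_nil m), lyndonRight,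
    lyndonLeft_multinacciWord hβ hmulti, length_multinacciWord, div_mul_eq_mul_div, hpow,
    div_self (by linarith)]

lemma IsQuasiGreedy.multinacciSeq_seqLe {d : ℕ → ℕ} (hd : IsQuasiGreedy β d) (hβ : 1 < β)
    (hm : 1 ≤ m) (hmulti : β ^ (m + 1) = ∑ i ∈ Finset.range (m + 1), β ^ i) :
    seqLe (multinacciSeq m) d := by
  refine hd.2.2.2 _ (multinacciSeq_le_one m) ?_ (tsum_multinacciSeq hβ hmulti)
  rintro ⟨N, hN⟩
  exact multinacciSeq_add_ne_zero (hN N le_rfl) one_pos hm (hN (N + 1) N.le_succ)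

end Multinacci

section FirstReturn

variable {β t : ℝ} {m n : ℕ}

lemma seqLt_take_drop_seqTake_greedy (hβ : 0 < β) (ht : 0 ≤ t) (hn : (Tbeta β)^[n] t < t)
    (hmin : ∀ k < n, t ≤ (Tbeta β)^[k] t) {i : ℕ} (hi : 0 < i) (hin : i < n) :
    seqLt (wordSeq ((seqTake (greedy β t) n).take (n - i)))
      (wordSeq ((seqTake (greedy β t) n).drop i)) := by
  rw [take_seqTake (n.sub_le i), drop_seqTake, ← greedy_iterate_Tbeta]
  refine seqLt_wordSeq_seqTake (seqLe_greedy_of_le hβ ht (hmin i hin)) ?_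
  by_contra! heq
  have hdiff := iterate_Tbeta_sub_iterate_Tbeta hβ ht (iterate_Tbeta_nonneg ht i) heq
  rw [← Function.iterate_add_apply, Nat.sub_add_cancel hin.le] at hdiff
  have hexpand : 0 ≤ β ^ (n - i) * ((Tbeta β)^[i] t - t) :=
    mul_nonneg (by positivity) (sub_nonneg.2 (hmin i hin))
  linarith [hmin (n - i) (by lia)]

lemma exists_greedy_add_eq_zero (hβ : 1 < β)
    (hmulti : β ^ (m + 1) = ∑ i ∈ Finset.range (m + 1), β ^ i) (ht : t ∈ Ico 0 1) (i : ℕ) :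
    ∃ j ≤ m, greedy β t (i + j) = 0 := by
  have hlt : (Tbeta β)^[i] t < ∑ j ∈ Finset.range (m + 1), 1 / β ^ (j + 1) :=
    (iterate_Tbeta_lt_one ht.2 i).trans_eq (sum_range_succ_one_div_pow_eq_one hβ hmulti).symm
  obtain ⟨j, hj, hzero⟩ :=
    exists_greedy_eq_zero_of_lt_sum (one_pos.trans hβ) (iterate_Tbeta_nonneg ht.1 i) hlt
  refine ⟨j, Nat.lt_succ_iff.1 hj, ?_⟩
  rwa [greedy_iterate_Tbeta, shiftN, add_comm] at hzero

lemma exists_greedy_eq_zero_of_mul_lt (hβ : 1 < β)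
    (hmulti : β ^ (m + 1) = ∑ i ∈ Finset.range (m + 1), β ^ i) (ht : 0 ≤ t)
    (htβ : β * t < β - 1) : ∃ j, 0 < j ∧ j ≤ m ∧ greedy β t j = 0 := by
  have hβ0 : 0 < β := one_pos.trans hβ
  have hlt : Tbeta β t < ∑ j ∈ Finset.range m, 1 / β ^ (j + 1) := by
    rw [sum_range_one_div_pow_eq_sub_one hβ hmulti]
    exact (Tbeta_le_mul hβ0.le ht).trans_lt htβ
  obtain ⟨j, hj, hzero⟩ := exists_greedy_eq_zero_of_lt_sum hβ0 (Tbeta_nonneg β t) hlt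
  refine ⟨j + 1, j.succ_pos, hj, ?_⟩
  rwa [← Function.iterate_one (Tbeta β), greedy_iterate_Tbeta, shiftN] at hzero

theorem isBetaLyndon_seqTake_greedy (hβ : β ∈ Ioo 1 2) (hm : 1 ≤ m)
    (hmulti : β ^ (m + 1) = ∑ i ∈ Finset.range (m + 1), β ^ i) (ht : t ∈ Ico 0 (1 - 1 / β))
    (hn : (Tbeta β)^[n] t < t) (hmin : ∀ k < n, t ≤ (Tbeta β)^[k] t) :
    IsBetaLyndon β (seqTake (greedy β t) n) := by
  have hβ0 : 0 < β := one_pos.trans hβ.1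
  have ht1 : t < 1 := ht.2.trans (sub_lt_self 1 (by positivity))
  have htβ : β * t < β - 1 :=
    calc β * t < β * (1 - 1 / β) := mul_lt_mul_of_pos_left ht.2 hβ0
      _ = β - 1 := by field_simp
  have hdigit : ∀ i, greedy β t i ≤ 1 := greedy_le_one ⟨hβ0, hβ.2.le⟩ ht1
  have hn0 : 0 < n := Nat.pos_of_ne_zero fun h ↦ by simp [h] at hn
  refine ⟨?_, ?_, fun i hi hin ↦ ?_, fun d hd k ↦ ?_⟩
  · rw [← List.length_pos_iff, length_seqTake]
    exact hn0
  · simpa [seqTake] using fun i _ ↦ hdigit i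
  · rw [length_seqTake] at hin ⊢
    exact seqLt_take_drop_seqTake_greedy hβ0 ht.1 hn hmin hi hin
  · have hadmissible := seqLt_shiftN_perSeq_multinacciSeq hn0 hdigit
      (greedy_zero_eq_zero (by linarith [hβ.2]))
      (exists_greedy_add_eq_zero hβ.1 hmulti ⟨ht.1, ht1⟩)
      (exists_greedy_eq_zero_of_mul_lt hβ.1 hmulti ht.1 htβ) k
    exact seqLt_of_seqLt_of_seqLe hadmissible (hd.multinacciSeq_seqLe hβ.1 hm hmulti)

theorem mem_Kset_self_of_notMem_lyndonUnionIco (hβ : β ∈ Ioo 1 2) (hmulti : IsMultinacci β)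
    (ht : t ∈ Ico 0 (1 - 1 / β)) (hnot : t ∉ lyndonUnionIco β) : t ∈ Kset β t := by
  obtain ⟨m, hm, hmulti⟩ := hmulti
  have hβ0 : 0 < β := one_pos.trans hβ.1
  refine ⟨⟨ht.1, ht.2.trans (sub_lt_self 1 (by positivity))⟩, ?_⟩
  by_contra! hreturn
  have hmin (k : ℕ) (hk : k < Nat.find hreturn) : t ≤ (Tbeta β)^[k] t :=
    not_lt.1 (Nat.find_min hreturn hk)
  exact hnot (mem_biUnion
    (isBetaLyndon_seqTake_greedy hβ hm hmulti ht (Nat.find_spec hreturn) hmin)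
    (mem_Ico_lyndonLeft_lyndonRight hβ.1 ht.1 (Nat.find_spec hreturn)))

end FirstReturn

/-- For a multinacci `β ∈ (1,2)`, the union of all β-Lyndon
intervals has full Lebesgue measure in `[0, 1 - 1/β)`. -/
theorem stmt_10 (β : ℝ) (hβ : β ∈ Set.Ioo (1 : ℝ) 2) (hmulti : IsMultinacci β) :
    MeasureTheory.volume (Set.Ico (0 : ℝ) (1 - 1 / β) \ lyndonUnionIco β) = 0 := by
  refine measure_mono_null ?_ (volume_setOf_mem_Kset_self hβ.1)
  rintro t ⟨ht, hnot⟩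
  exact mem_Kset_self_of_notMem_lyndonUnionIco hβ hmulti ht hnot
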